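/- arXiv:2103.06844 — 2 statements merged into one kernel-verified Lean document; each statement's English description precedes it below -/
import Mathlib

section
/- For every real number b > 0, the sequence N ↦ (b/N)² · ( ∑_{n=1}^{N+1} n·(1 − b/N)^{n−1} + ∑_{n=1}^{N} n·(1 − b/N)^{2N+1−n} ) tends to (1 − e^{−b})² as N → ∞. -/
open Filter Finset

/-!
The two sums collect the terms of `(∑ i ≤ N, x ^ i) ^ 2`, `x = 1 - b / N`, along the diagonals of
the square `{0, …, N}²`: the first over `i + j ≤ N`, the second over `i + j > N`. Since
`b / N = 1 - x`, the whole expression is `(1 - x ^ (N + 1)) ^ 2`, and `x ^ (N + 1) → exp (-b)`.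
-/

section DiagonalSums

variable {M : Type*} [AddCommMonoid M]

lemma sum_range_sum_range_sub_eq_sum_Icc_nsmul (f : ℕ → M) (n : ℕ) :
    ∑ i ∈ range n, ∑ j ∈ range (n - i), f (i + j) = ∑ k ∈ Icc 1 n, k • f (k - 1) := by
  have diagonal_const (k : ℕ) : ∑ i ∈ range (k + 1), f (i + (k - i)) = (k + 1) • f k := by
    rw [sum_congr rfl fun i hi => by rw [Nat.add_sub_cancel' (mem_range_succ_iff.mp hi)],
      sum_const, card_range]
  rw [← sum_range_diag_flip n fun i j => f (i + j), ← Ico_add_one_right_eq_Icc,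
    sum_Ico_eq_sum_range]
  exact sum_congr rfl fun k _ => by rw [diagonal_const, add_comm 1 k, Nat.add_sub_cancel]

lemma sum_range_succ_eq_add_sum_reflect (f : ℕ → M) {i n : ℕ} (hi : i ≤ n) :
    ∑ j ∈ range (n + 1), f j = ∑ j ∈ range (n + 1 - i), f j + ∑ j ∈ range i, f (n - j) := by
  rw [← sum_range_add_sum_Ico f (Nat.sub_le (n + 1) i)]
  congr 1
  rw [range_eq_Ico, sum_Ico_reflect f 0 (by lia), Nat.sub_zero]

lemma sum_range_sum_range_add_eq_sum_diagonals (f : ℕ → M) (n : ℕ) :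
    ∑ i ∈ range (n + 1), ∑ j ∈ range (n + 1), f (i + j) =
      ∑ k ∈ Icc 1 (n + 1), k • f (k - 1) + ∑ k ∈ Icc 1 n, k • f (2 * n + 1 - k) := by
  have upper_triangle :
      ∑ i ∈ range (n + 1), ∑ j ∈ range i, f (i + (n - j)) =
        ∑ k ∈ Icc 1 n, k • f (2 * n + 1 - k) :=
    calc
      _ = ∑ i ∈ range (n + 1), ∑ j ∈ range (n - i), f (n - i + (n - j)) := by
        rw [← sum_range_reflect, Nat.add_sub_cancel]
      _ = ∑ i ∈ range n, ∑ j ∈ range (n - i), f (2 * n - (i + j)) := by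
        rw [sum_range_succ, Nat.sub_self, sum_range_zero, add_zero]
        refine sum_congr rfl fun i hi => sum_congr rfl fun j hj => ?_
        rw [mem_range] at hi hj
        congr 1
        lia
      _ = ∑ k ∈ Icc 1 n, k • f (2 * n - (k - 1)) :=
        sum_range_sum_range_sub_eq_sum_Icc_nsmul (fun m => f (2 * n - m)) n
      _ = _ := sum_congr rfl fun k hk => by
        rw [show 2 * n - (k - 1) = 2 * n + 1 - k by have := (mem_Icc.mp hk).1; lia]
  rw [← sum_range_sum_range_sub_eq_sum_Icc_nsmul, ← upper_triangle, ← sum_add_distrib]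
  exact sum_congr rfl fun i hi =>
    sum_range_succ_eq_add_sum_reflect (fun j => f (i + j)) (mem_range_succ_iff.mp hi)

end DiagonalSums

lemma geom_sum_sq_eq_sum_diagonals {R : Type*} [Semiring R] (x : R) (n : ℕ) :
    (∑ i ∈ range (n + 1), x ^ i) ^ 2 =
      ∑ k ∈ Icc 1 (n + 1), (k : R) * x ^ (k - 1) +
        ∑ k ∈ Icc 1 n, (k : R) * x ^ (2 * n + 1 - k) := by
  simp only [sq, sum_mul_sum, ← pow_add, ← nsmul_eq_mul]
  exact sum_range_sum_range_add_eq_sum_diagonals (x ^ ·) n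

lemma tendsto_one_sub_div_pow_succ_exp_neg (b : ℂ) :
    Tendsto (fun n : ℕ => (1 - b / n) ^ (n + 1)) atTop (nhds (Complex.exp (-b))) := by
  have base : Tendsto (fun n : ℕ => 1 - b / n) atTop (nhds 1) := by
    simpa using (tendsto_const_div_atTop_nhds_zero_nat b).const_sub 1
  have power : Tendsto (fun n : ℕ => (1 - b / n) ^ n) atTop (nhds (Complex.exp (-b))) := by
    simpa only [neg_div, ← sub_eq_add_neg] using Complex.tendsto_one_add_div_pow_exp (-b)
  simpa only [pow_succ, mul_one] using power.mul base

theorem geom_sq_riemann_exp_general (b : ℂ) :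
    Tendsto (fun N : ℕ =>
        (b / N) ^ 2 *
          ((∑ n ∈ Icc 1 (N + 1), (n : ℂ) * (1 - b / N) ^ (n - 1)) +
            ∑ n ∈ Icc 1 N, (n : ℂ) * (1 - b / N) ^ (2 * N + 1 - n)))
      atTop (nhds ((1 - Complex.exp (-b)) ^ 2)) := by
  refine (((tendsto_one_sub_div_pow_succ_exp_neg b).const_sub 1).pow 2).congr fun N => ?_
  rw [← geom_sum_sq_eq_sum_diagonals, ← mul_pow, ← mul_neg_geom_sum, sub_sub_cancel]

theorem geom_sq_riemann_exp (b : ℝ) (hb : 0 < b) :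
    Tendsto (fun N : ℕ =>
        (b / N) ^ 2 *
          ((∑ n ∈ Finset.Icc 1 (N + 1), (n : ℝ) * (1 - b / N) ^ (n - 1)) +
            ∑ n ∈ Finset.Icc 1 N, (n : ℝ) * (1 - b / N) ^ (2 * N + 1 - n)))
      atTop (nhds ((1 - Real.exp (-b)) ^ 2)) := by
  rw [← tendsto_ofReal_iff]
  exact_mod_cast geom_sq_riemann_exp_general b
end

section
/- The central binomial coefficient obeys the Stirling asymptotic: the sequence m ↦ C(2m, m) · √(π·m) / 4^m of real numbers converges to 1 as m → ∞. -/
open Filter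

/-!
In the quotient `stirlingSeq (a + b) / (stirlingSeq a * stirlingSeq b)` the powers of `e` cancel, so
it is an explicit multiple of the binomial coefficient `C(a + b, a)`; by Stirling's formula it tends
to `√π / (√π * √π)` as `a` and `b` grow. The central coefficient is the diagonal `a = b`.
-/

open Real Stirling

/-- The identity persists at `a = 0` and `b = 0`, where both sides vanish: `stirlingSeq 0 = 0`. -/
theorem stirlingSeq_add_div_mul (a b : ℕ) :
    stirlingSeq (a + b) / (stirlingSeq a * stirlingSeq b) =
      (a + b).choose a * √(2 * (a * b / (a + b))) * (a ^ a * b ^ b / (a + b) ^ (a + b)) := by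
  have sqrt_factor : √(2 * a) * √(2 * b) / √(2 * (a + b)) = √(2 * (a * b / (a + b))) := by
    rw [← sqrt_mul (by positivity), ← sqrt_div (by positivity)]
    congr 1
    rw [mul_assoc, mul_div_mul_left _ _ two_ne_zero]
    ring
  have exp_factor : ((a : ℝ) / exp 1) ^ a * (b / exp 1) ^ b / ((a + b) / exp 1) ^ (a + b) =
      a ^ a * b ^ b / (a + b) ^ (a + b) := by
    rw [div_pow, div_pow, div_pow, div_mul_div_comm, ← pow_add,
      div_div_div_cancel_right₀ (by positivity)]
  rw [← sqrt_factor, ← exp_factor, Nat.cast_add_choose]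
  simp only [stirlingSeq, Nat.cast_add, div_mul_div_comm, div_div_div_eq]
  ring

theorem tendsto_choose_mul_sqrt_mul_pow {ι : Type*} {l : Filter ι} {a b : ι → ℕ}
    (ha : Tendsto a l atTop) (hb : Tendsto b l atTop) :
    Tendsto (fun i ↦ ((a i + b i).choose (a i) : ℝ) * √(2 * π * (a i * b i / (a i + b i))) *
      (a i ^ a i * b i ^ b i / (a i + b i) ^ (a i + b i))) l (nhds 1) := by
  have sqrt_pi_ne_zero : √π ≠ 0 := by positivity
  have tendsto_quotient :
      Tendsto (fun i ↦ √π * (stirlingSeq (a i + b i) / (stirlingSeq (a i) * stirlingSeq (b i))))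
        l (nhds (√π * (√π / (√π * √π)))) :=
    ((tendsto_stirlingSeq_sqrt_pi.comp (ha.atTop_add_atTop hb)).div
      ((tendsto_stirlingSeq_sqrt_pi.comp ha).mul (tendsto_stirlingSeq_sqrt_pi.comp hb))
      (mul_ne_zero sqrt_pi_ne_zero sqrt_pi_ne_zero)).const_mul √π
  have limit_eq_one : √π * (√π / (√π * √π)) = 1 := by field_simp
  rw [limit_eq_one] at tendsto_quotient
  refine tendsto_quotient.congr fun i ↦ ?_
  rw [stirlingSeq_add_div_mul, mul_comm 2 π, mul_assoc π, sqrt_mul pi_pos.le]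
  ring

theorem self_pow_mul_self_pow_div_add_self_pow (m : ℕ) :
    (m : ℝ) ^ m * m ^ m / (m + m) ^ (m + m) = 1 / 4 ^ m := by
  rcases eq_or_ne m 0 with rfl | hm
  · simp
  · rw [← mul_pow, ← two_mul m, pow_mul, ← div_pow, ← one_div_pow]
    congr 1
    field_simp
    norm_num

theorem central_binom_stirling :
    Tendsto (fun m : ℕ =>
        (Nat.choose (2 * m) m : ℝ) * Real.sqrt (Real.pi * m) / 4 ^ m)
      atTop (nhds 1) := by
  refine (tendsto_choose_mul_sqrt_mul_pow tendsto_id tendsto_id).congr fun m ↦ ?_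
  have sqrt_arg : 2 * π * ((m : ℝ) * m / (m + m)) = π * m := by
    rw [← two_mul, mul_comm 2 (m : ℝ), ← div_div, mul_self_div_self]
    ring
  simp only [id_eq]
  rw [self_pow_mul_self_pow_div_add_self_pow, sqrt_arg, ← two_mul, mul_one_div]
end
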